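/- Reduction to singleton views (Lemma 'ssd-view-existence-word'): Let L_s be a language over α ⊕ β and L_t a language over β. If there exist views V : α → Language β capturing ⟨L_s, L_t⟩, then there exist views V' : α → Language β capturing ⟨L_s, L_t⟩ such that for every a ∈ α, either V'(a) = ∅ or V'(a) = {w} for a single word w over β. -/

import Mathlib

/-!
In each nonempty view `V a` pick one word and let `V' a` be the singleton of that word; leave empty
views empty. Substitution is monotone in the views (`langSubst_mono`), so `L_s[V'] ⊆ L_s[V] ⊆ L_t`.
A product of languages is nonempty exactly when every factor is, so `s[V']` is nonempty whenever
`s[V]` is (`subst_nonempty`), and hence `L_s[V']` is nonempty.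
-/

/-- Substituted letter: a source letter is replaced by its view, a target letter by itself. -/
def viewHat {α β : Type*} (V : α → Language β) : α ⊕ β → Language β
  | Sum.inl a => V a
  | Sum.inr b => {[b]}

/-- Substitution `s[V]` of views into a word over the combined alphabet. -/
def subst {α β : Type*} (V : α → Language β) (s : List (α ⊕ β)) : Language β :=
  (s.map (viewHat V)).prod

/-- Substitution `L_s[V]` of views into a source language. -/
def langSubst {α β : Type*} (V : α → Language β) (Ls : Language (α ⊕ β)) : Language β :=
  ⋃ s ∈ Ls, subst V s

/-- Views `V` capture the mapping `⟨L_s, L_t⟩`. -/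
def Captures {α β : Type*} (V : α → Language β) (Ls : Language (α ⊕ β))
    (Lt : Language β) : Prop :=
  langSubst V Ls ≤ Lt ∧ langSubst V Ls ≠ 0

theorem mem_langSubst {α β : Type*} {V : α → Language β} {Ls : Language (α ⊕ β)} {w : List β} :
    w ∈ langSubst V Ls ↔ ∃ s ∈ Ls, w ∈ subst V s := by
  refine Iff.trans (Set.mem_iUnion₂ (s := fun (s : List (α ⊕ β)) (_ : s ∈ Ls) => subst V s)) ?_
  exact ⟨fun ⟨s, hs, hw⟩ => ⟨s, hs, hw⟩, fun ⟨s, hs, hw⟩ => ⟨s, hs, hw⟩⟩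

theorem subst_cons {α β : Type*} (V : α → Language β) (c : α ⊕ β) (s : List (α ⊕ β)) :
    subst V (c :: s) = viewHat V c * subst V s := by
  simp [subst]

theorem subst_mono {α β : Type*} {V' V : α → Language β} (hle : ∀ a, V' a ≤ V a)
    (s : List (α ⊕ β)) : subst V' s ≤ subst V s := by
  induction s with
  | nil => exact le_rfl
  | cons c s ih =>
    rw [subst_cons, subst_cons]
    refine mul_le_mul' ?_ ih
    cases c with
    | inl a => exact hle a
    | inr b => exact le_rfl

theorem langSubst_mono {α β : Type*} {V' V : α → Language β} (hle : ∀ a, V' a ≤ V a)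
    (Ls : Language (α ⊕ β)) : langSubst V' Ls ≤ langSubst V Ls := by
  intro w hw
  obtain ⟨s, hs, hws⟩ := mem_langSubst.1 hw
  exact mem_langSubst.2 ⟨s, hs, subst_mono hle s hws⟩

/-- If `V'` is nonempty wherever `V` is, then `s[V']` is nonempty whenever `s[V]` is: the factors of
a word of `s[V]` can be replaced one by one by words of the views `V'`. -/
theorem subst_nonempty {α β : Type*} {V' V : α → Language β}
    (hne : ∀ a, (∃ w, w ∈ V a) → ∃ w, w ∈ V' a) (s : List (α ⊕ β))
    (hs : ∃ w, w ∈ subst V s) : ∃ w, w ∈ subst V' s := by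
  induction s with
  | nil => exact hs
  | cons c s ih =>
    obtain ⟨w, hw⟩ := hs
    rw [subst_cons, Language.mem_mul] at hw
    obtain ⟨u, hu, v, hv, -⟩ := hw
    obtain ⟨v', hsnd⟩ := ih ⟨v, hv⟩
    have hc : ∃ u', u' ∈ viewHat V' c := by
      cases c with
      | inl a => exact hne a ⟨u, hu⟩
      | inr b => exact ⟨u, hu⟩
    obtain ⟨u', hfst⟩ := hc
    refine ⟨u' ++ v', ?_⟩
    rw [subst_cons]
    exact Language.append_mem_mul hfst hsnd

/-- Lemma "ssd-view-existence-word": if some views capture `⟨L_s, L_t⟩`, then some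
views each of which is either empty or a single word capture `⟨L_s, L_t⟩`. -/
theorem ssd_view_existence_word {α β : Type*}
    (Ls : Language (α ⊕ β)) (Lt : Language β)
    (h : ∃ V : α → Language β, Captures V Ls Lt) :
    ∃ V' : α → Language β, Captures V' Ls Lt ∧
      ∀ a : α, V' a = 0 ∨ ∃ w : List β, V' a = {w} := by
  obtain ⟨V, hsub, hne⟩ := h
  have key : ∀ a, ∃ L : Language β, L ≤ V a ∧ ((∃ w, w ∈ V a) → ∃ w, w ∈ L) ∧
      (L = 0 ∨ ∃ w : List β, L = {w}) := by
    intro a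
    by_cases ha : ∃ w, w ∈ V a
    · obtain ⟨w, hw⟩ := ha
      refine ⟨{w}, ?_, fun _ => ⟨w, Set.mem_singleton w⟩, Or.inr ⟨w, rfl⟩⟩
      intro x hx
      rw [Set.mem_singleton_iff.1 hx]
      exact hw
    · exact ⟨0, bot_le, fun h => absurd h ha, Or.inl rfl⟩
  choose V' hle hpres hsingle using key
  refine ⟨V', ⟨(langSubst_mono hle Ls).trans hsub, fun h0 => hne ?_⟩, hsingle⟩
  ext w
  refine ⟨fun hw => ?_, fun hw => absurd hw (Language.notMem_zero w)⟩
  obtain ⟨s, hs, hws⟩ := mem_langSubst.1 hw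
  obtain ⟨w', hw'⟩ := subst_nonempty hpres s ⟨w, hws⟩
  have hmem : w' ∈ langSubst V' Ls := mem_langSubst.2 ⟨s, hs, hw'⟩
  rw [h0] at hmem
  exact absurd hmem (Language.notMem_zero w')
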